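/- Let G be a finite simple graph having a connected component whose vertex set S induces a subgraph isomorphic to T₆ (so no edge of G joins S to the rest of G). Then the maximum order of an induced forest of G equals the maximum order of an induced forest of the graph obtained from G by deleting S, plus 4. -/

import Mathlib

/-- The graph `T₆`: the complete bipartite graph `K_{3,3}` with parts
`{inl 0, inl 1, inl 2}` and `{inr 0, inr 1, inr 2}`, minus the edge `inl 2 — inr 2`. -/
def T6graph : SimpleGraph (Fin 3 ⊕ Fin 3) where
  Adj x y := (∃ i j, x = Sum.inl i ∧ y = Sum.inr j ∧ ¬(i = 2 ∧ j = 2)) ∨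
             (∃ i j, x = Sum.inr j ∧ y = Sum.inl i ∧ ¬(i = 2 ∧ j = 2))
  symm := by
    constructor
    rintro x y (⟨i, j, h1, h2, h3⟩ | ⟨i, j, h1, h2, h3⟩)
    · exact Or.inr ⟨i, j, h2, h1, h3⟩
    · exact Or.inl ⟨i, j, h2, h1, h3⟩
  loopless := by
    constructor
    rintro x (⟨i, j, h1, h2, -⟩ | ⟨i, j, h1, h2, -⟩) <;> simp_all

/-- The maximum order of an induced forest of `G`. -/
noncomputable def maxIndForest {V : Type*} (G : SimpleGraph V) : ℕ :=
  sSup {n : ℕ | ∃ s : Set V, (G.induce s).IsAcyclic ∧ s.ncard = n}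

/-!
An induced forest of `G` is the union of its traces on `S` and on `Sᶜ`, and conversely any two
induced forests on the two sides may be combined, since a cycle cannot leave `S`. So the maximum
order is additive, and it remains to see that it equals 4 for `T₆`. The vertex `0` of one part and
the whole other part form an induced star on 4 vertices. On the other hand, deleting any vertex
of `T₆` leaves a 4-cycle: two remaining vertices of the part that lost one, with the vertices
`0` and `1` of the other part, the missing edge being incident to `2` in both parts.
-/

section

open SimpleGraph
open scoped Pointwise

variable {V W : Type*} {G : SimpleGraph V} {H : SimpleGraph W}

theorem isAcyclic_induce_image_iff (f : G ↪g H) (s : Set V) :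
    (H.induce (f '' s)).IsAcyclic ↔ (G.induce s).IsAcyclic := by
  have e := (f.comp (.induce s)).isoInduceRange
  have hrange : Set.range (f.comp (.induce s)) = f '' s := by
    ext; simp
  rw [hrange] at e
  exact e.isAcyclic_iff.symm

theorem isAcyclic_induce_preimage (f : G ↪g H) {t : Set W} (ht : (H.induce t).IsAcyclic) :
    (G.induce (f ⁻¹' t)).IsAcyclic :=
  (isAcyclic_induce_image_iff f _).1 <|
    ht.embedding (H.induceHomOfLE (Set.image_preimage_subset f t))

theorem isAcyclic_induce_iff_forall_isCycle {t : Set V} :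
    (G.induce t).IsAcyclic ↔
      ∀ (u : V) (c : G.Walk u u), c.IsCycle → ¬ ∀ x ∈ c.support, x ∈ t := by
  have hinj : Function.Injective (Embedding.induce (G := G) t).toHom := Subtype.val_injective
  constructor
  · intro h u c hc hct
    refine h (c.induce t hct) ?_
    rw [← Walk.isCycle_map_iff_of_injective hinj, Walk.map_induce]
    exact hc
  · intro h u c hc
    refine h _ _ (hc.map hinj) fun x hx ↦ ?_
    obtain ⟨y, -, rfl⟩ := List.mem_map.1 (c.support_map _ ▸ hx)
    exact y.2

theorem mem_left_of_mem_support_of_not_adj {s t : Set V} (hst : ∀ u ∈ s, ∀ v ∈ t, ¬ G.Adj u v)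
    {u v : V} (p : G.Walk u v) (hp : ∀ x ∈ p.support, x ∈ s ∪ t) (hu : u ∈ s) :
    ∀ x ∈ p.support, x ∈ s := by
  classical
  intro x hx
  by_contra hxs
  obtain ⟨d, hd, hfst, hsnd⟩ := (p.takeUntil x hx).exists_boundary_dart s hu hxs
  have hdp : d.snd ∈ p.support :=
    p.dart_snd_mem_support_of_mem_darts (p.darts_takeUntil_subset_darts hx hd)
  exact hst _ hfst _ ((hp _ hdp).resolve_left hsnd) d.adj

theorem isAcyclic_induce_union {s t : Set V} (hs : (G.induce s).IsAcyclic)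
    (ht : (G.induce t).IsAcyclic) (hst : ∀ u ∈ s, ∀ v ∈ t, ¬ G.Adj u v) :
    (G.induce (s ∪ t)).IsAcyclic := by
  rw [isAcyclic_induce_iff_forall_isCycle] at hs ht ⊢
  intro u c hc hcst
  have hts : ∀ v ∈ t, ∀ u ∈ s, ¬ G.Adj v u := fun v hv u hu h ↦ hst u hu v hv h.symm
  rcases hcst u c.start_mem_support with hu | hu
  · exact hs u c hc (mem_left_of_mem_support_of_not_adj hst c hcst hu)
  · exact ht u c hc (mem_left_of_mem_support_of_not_adj hts c (Set.union_comm s t ▸ hcst) hu)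

theorem isAcyclic_induce_insert_of_isIndepSet {s : Set V} (hs : G.IsIndepSet s) (v : V) :
    (G.induce (insert v s)).IsAcyclic := by
  refine (isAcyclic_starGraph ⟨v, s.mem_insert v⟩).anti ?_
  rintro ⟨x, hx⟩ ⟨y, hy⟩ hxy
  refine starGraph_adj.2 ⟨hxy.ne, ?_⟩
  rcases hx with rfl | hx
  · exact .inl rfl
  rcases hy with rfl | hy
  · exact .inr rfl
  exact absurd hxy (hs hx hy (G.ne_of_adj hxy))

theorem subsingleton_commonNeighbors_of_isAcyclic (hG : G.IsAcyclic) {u v : V} (huv : u ≠ v) :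
    (G.commonNeighbors u v).Subsingleton := by
  rintro x ⟨hux, hvx⟩ y ⟨huy, hvy⟩
  have isPath {z : V} (huz : G.Adj u z) (hvz : G.Adj v z) :
      (Walk.cons huz (.cons hvz.symm .nil)).IsPath := by
    simp [huz.ne, hvz.ne', huv]
  exact congrArg (·.1.snd) <|
    (hG.subsingleton_path u v).elim ⟨_, isPath hux hvx⟩ ⟨_, isPath huy hvy⟩

theorem subsingleton_commonNeighbors_inter_of_isAcyclic_induce {t : Set V}
    (ht : (G.induce t).IsAcyclic) {u v : V} (hu : u ∈ t) (hv : v ∈ t) (huv : u ≠ v) :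
    (G.commonNeighbors u v ∩ t).Subsingleton := by
  have hsub := subsingleton_commonNeighbors_of_isAcyclic ht (u := ⟨u, hu⟩) (v := ⟨v, hv⟩)
    (Subtype.coe_ne_coe.1 huv)
  rintro x ⟨hx, hxt⟩ y ⟨hy, hyt⟩
  exact congrArg Subtype.val (hsub (x := ⟨x, hxt⟩) hx (y := ⟨y, hyt⟩) hy)

/-- The orders of the induced forests of `G`, a set with supremum `maxIndForest G`. An infinite
forest has `Set.ncard` equal to 0, the order of the empty forest, so it adds nothing to the set. -/
def indForestOrders (G : SimpleGraph V) : Set ℕ :=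
  {n | ∃ s : Set V, (G.induce s).IsAcyclic ∧ s.ncard = n}

theorem zero_mem_indForestOrders (G : SimpleGraph V) : 0 ∈ indForestOrders G :=
  ⟨∅, .of_subsingleton, Set.ncard_empty V⟩

theorem mem_indForestOrders_iff_exists_finite {n : ℕ} :
    n ∈ indForestOrders G ↔ ∃ s : Set V, s.Finite ∧ (G.induce s).IsAcyclic ∧ s.ncard = n := by
  constructor
  · rintro ⟨s, hs, rfl⟩
    rcases s.finite_or_infinite with hfin | hinf
    · exact ⟨s, hfin, hs, rfl⟩
    · exact ⟨∅, Set.finite_empty, .of_subsingleton, by rw [Set.ncard_empty, hinf.ncard]⟩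
  · rintro ⟨s, -, hs, rfl⟩
    exact ⟨s, hs, rfl⟩

theorem bddAbove_indForestOrders [Finite V] (G : SimpleGraph V) :
    BddAbove (indForestOrders G) := by
  refine ⟨Nat.card V, ?_⟩
  rintro _ ⟨s, -, rfl⟩
  exact s.ncard_le_card

theorem indForestOrders_subset_of_embedding (f : G ↪g H) :
    indForestOrders G ⊆ indForestOrders H := by
  rintro _ ⟨s, hs, rfl⟩
  exact ⟨f '' s, (isAcyclic_induce_image_iff f s).2 hs, Set.ncard_image_of_injective s f.injective⟩

theorem isGreatest_maxIndForest (hG : BddAbove (indForestOrders G)) :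
    IsGreatest (indForestOrders G) (maxIndForest G) :=
  ⟨Nat.sSup_mem ⟨0, zero_mem_indForestOrders G⟩ hG, fun _ hn ↦ le_csSup hG hn⟩

theorem maxIndForest_congr (e : G ≃g H) : maxIndForest G = maxIndForest H :=
  congrArg sSup <| (indForestOrders_subset_of_embedding e.toEmbedding).antisymm
    (indForestOrders_subset_of_embedding e.symm.toEmbedding)

theorem indForestOrders_subset_add_compl (G : SimpleGraph V) (S : Set V) :
    indForestOrders G ⊆ indForestOrders (G.induce S) + indForestOrders (G.induce Sᶜ) := by
  intro n hn
  obtain ⟨t, htfin, ht, rfl⟩ := mem_indForestOrders_iff_exists_finite.1 hn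
  have trace (T : Set V) : (t ∩ T).ncard ∈ indForestOrders (G.induce T) := by
    refine ⟨(↑) ⁻¹' t, isAcyclic_induce_preimage (.induce T) ht, ?_⟩
    rw [← Set.ncard_image_of_injective _ Subtype.val_injective, Subtype.image_preimage_coe,
      Set.inter_comm]
  have hcard : (t ∩ S).ncard + (t ∩ Sᶜ).ncard = t.ncard :=
    Set.ncard_inter_add_ncard_sdiff_eq_ncard t S htfin
  exact ⟨_, trace S, _, trace Sᶜ, hcard⟩

theorem add_compl_subset_indForestOrders {S : Set V} (hS : ∀ u ∈ S, ∀ v ∉ S, ¬ G.Adj u v) :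
    indForestOrders (G.induce S) + indForestOrders (G.induce Sᶜ) ⊆ indForestOrders G := by
  rintro _ ⟨m, hm, n, hn, rfl⟩
  obtain ⟨s, hsfin, hs, rfl⟩ := mem_indForestOrders_iff_exists_finite.1 hm
  obtain ⟨t, htfin, ht, rfl⟩ := mem_indForestOrders_iff_exists_finite.1 hn
  have hsS : (↑) '' s ⊆ S := Subtype.coe_image_subset S s
  have htS : (↑) '' t ⊆ Sᶜ := Subtype.coe_image_subset Sᶜ t
  refine ⟨(↑) '' s ∪ (↑) '' t, isAcyclic_induce_union
    ((isAcyclic_induce_image_iff (.induce S) s).2 hs)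
    ((isAcyclic_induce_image_iff (.induce Sᶜ) t).2 ht)
    fun u hu v hv ↦ hS u (hsS hu) v (htS hv), ?_⟩
  rw [Set.ncard_union_eq (disjoint_compl_right.mono hsS htS) (hsfin.image _) (htfin.image _),
    Set.ncard_image_of_injective s Subtype.val_injective,
    Set.ncard_image_of_injective t Subtype.val_injective]

theorem maxIndForest_eq_add_compl {S : Set V} (hG : BddAbove (indForestOrders G))
    (hS : ∀ u ∈ S, ∀ v ∉ S, ¬ G.Adj u v) :
    maxIndForest G = maxIndForest (G.induce S) + maxIndForest (G.induce Sᶜ) := by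
  have greatest (T : Set V) :
      IsGreatest (indForestOrders (G.induce T)) (maxIndForest (G.induce T)) :=
    isGreatest_maxIndForest (hG.mono (indForestOrders_subset_of_embedding (.induce T)))
  refine (isGreatest_maxIndForest hG).unique ⟨?_, ?_⟩
  · exact add_compl_subset_indForestOrders hS (Set.add_mem_add (greatest S).1 (greatest Sᶜ).1)
  · exact upperBounds_mono_set (indForestOrders_subset_add_compl G S)
      (add_mem_upperBounds_add (greatest S).2 (greatest Sᶜ).2)

theorem T6graph_adj_inl_inr {i j : Fin 3} :
    T6graph.Adj (.inl i) (.inr j) ↔ ¬ (i = 2 ∧ j = 2) := by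
  simp [T6graph]

theorem isIndepSet_T6graph_range_inr : T6graph.IsIndepSet (Set.range Sum.inr) := by
  rintro _ ⟨i, rfl⟩ _ ⟨j, rfl⟩ -
  simp [T6graph]

theorem four_mem_indForestOrders_T6graph : 4 ∈ indForestOrders T6graph := by
  refine ⟨insert (.inl 0) (Set.range Sum.inr),
    isAcyclic_induce_insert_of_isIndepSet isIndepSet_T6graph_range_inr _, ?_⟩
  rw [Set.ncard_insert_of_notMem (by simp), Set.ncard_range_of_injective Sum.inr_injective,
    Nat.card_fin]

theorem not_isAcyclic_T6graph_induce_compl_singleton (v : Fin 3 ⊕ Fin 3) :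
    ¬ (T6graph.induce {v}ᶜ).IsAcyclic := by
  intro h
  have exists_pair (k : Fin 3) : ∃ i j, i ≠ k ∧ j ≠ k ∧ i ≠ j := by decide +revert
  rcases v with k | k <;> obtain ⟨i, j, hik, hjk, hij⟩ := exists_pair k
  · have hsub := subsingleton_commonNeighbors_inter_of_isAcyclic_induce h
      (u := .inl i) (v := .inl j) (by simpa) (by simpa) (by simpa)
    simpa using hsub (x := .inr 0) (by simp [mem_commonNeighbors, T6graph_adj_inl_inr])
      (y := .inr 1) (by simp [mem_commonNeighbors, T6graph_adj_inl_inr])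
  · have hsub := subsingleton_commonNeighbors_inter_of_isAcyclic_induce h
      (u := .inl 0) (v := .inl 1) (by simp) (by simp) (by simp)
    exact hij <| Sum.inr_injective <|
      hsub (x := .inr i) (by simp [mem_commonNeighbors, T6graph_adj_inl_inr, hik])
        (y := .inr j) (by simp [mem_commonNeighbors, T6graph_adj_inl_inr, hjk])

theorem ncard_le_four_of_isAcyclic_T6graph_induce {t : Set (Fin 3 ⊕ Fin 3)}
    (ht : (T6graph.induce t).IsAcyclic) : t.ncard ≤ 4 := by
  by_contra! hlt
  have hsum : t.ncard + tᶜ.ncard = 6 := by simpa using t.ncard_add_ncard_compl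
  have hcompl : tᶜ.ncard ≤ 1 := by lia
  obtain ⟨v, hv⟩ := (Set.ncard_le_one_iff_subset_singleton).1 hcompl
  exact not_isAcyclic_T6graph_induce_compl_singleton v <|
    ht.embedding (T6graph.induceHomOfLE (Set.compl_subset_comm.1 hv))

theorem maxIndForest_T6graph : maxIndForest T6graph = 4 := by
  refine IsGreatest.csSup_eq ⟨four_mem_indForestOrders_T6graph, ?_⟩
  rintro _ ⟨t, ht, rfl⟩
  exact ncard_le_four_of_isAcyclic_T6graph_induce ht

theorem maxIndForest_of_T6_component_general (G : SimpleGraph V) (S : Set V)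
    (hG : BddAbove (indForestOrders G)) (hiso : Nonempty ((G.induce S) ≃g T6graph))
    (hcomp : ∀ u ∈ S, ∀ v ∉ S, ¬ G.Adj u v) :
    maxIndForest G = maxIndForest (G.induce Sᶜ) + 4 := by
  obtain ⟨e⟩ := hiso
  rw [maxIndForest_eq_add_compl hG hcomp, maxIndForest_congr e, maxIndForest_T6graph, add_comm]

end

/-- If `S` is the vertex set of a connected component of `G` inducing a copy of `T₆`,
then the maximum order of an induced forest of `G` equals that of `G` with `S`
deleted, plus 4. -/
theorem maxIndForest_of_T6_component {V : Type*} [Fintype V] (G : SimpleGraph V)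
    (S : Set V)
    (hiso : Nonempty ((G.induce S) ≃g T6graph))
    (hcomp : ∀ u ∈ S, ∀ v ∉ S, ¬ G.Adj u v) :
    maxIndForest G = maxIndForest (G.induce Sᶜ) + 4 :=
  maxIndForest_of_T6_component_general G S (bddAbove_indForestOrders G) hiso hcomp
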